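/- arXiv:1905.02325 — 3 statements merged into one kernel-verified Lean document; each statement's English description precedes it below -/
import Mathlib

section
/- Let P be a univariate real polynomial (viewed as a function ℝ → ℝ). Then P is nondecreasing on all of ℝ if and only if there exist a constant c ∈ ℝ and real polynomials p₁, p₂ such that for every z ∈ ℝ, P(z) = c + ∫₀^z (p₁(u)² + p₂(u)²) du. In particular, in the representation of a nondecreasing polynomial as c plus the integral from 0 of a sum of squares of polynomials, the number of squares can always be chosen to be at most 2. -/
open MeasureTheory intervalIntegral

/-!
A polynomial is nondecreasing iff its derivative is nonnegative, and by the fundamental theorem of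
calculus the integrand in the representation must be that derivative; so the question is which
polynomials are nonnegative on `ℝ`.

If `p ≥ 0` is not constant, take a complex root `a + b * I`. It is paired with its conjugate when
`b ≠ 0` and is a double root when `b = 0`, since it is then a minimum; in either case
`(X - a) ^ 2 + b ^ 2` divides `p`. The cofactor is again nonnegative and has smaller degree, and
sums of two squares are closed under multiplication.
-/

section

open Polynomial Filter

theorem X_sub_C_sq_dvd_of_isLocalExtr {p : ℝ[X]} {r : ℝ} (hr : p.IsRoot r)
    (hext : IsLocalExtr (fun x => p.eval x) r) : (X - C r) ^ 2 ∣ p := by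
  rcases eq_or_ne p 0 with rfl | hp
  · exact dvd_zero _
  · have hderiv : p.derivative.IsRoot r := hext.hasDerivAt_eq_zero (p.hasDerivAt r)
    exact (le_rootMultiplicity_iff hp).1 ((one_lt_rootMultiplicity_iff_isRoot hp).2 ⟨hr, hderiv⟩)

theorem X_sub_C_re_sq_add_C_im_sq_dvd_of_im_ne_zero {p : ℝ[X]} {z : ℂ} (hz : aeval z p = 0)
    (him : z.im ≠ 0) : (X - C z.re) ^ 2 + C z.im ^ 2 ∣ p := by
  have hquad : (X - C z.re) ^ 2 + C z.im ^ 2 = X ^ 2 - C (2 * z.re) * X + C (‖z‖ ^ 2) := by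
    rw [← Complex.normSq_eq_norm_sq, Complex.normSq_apply]
    simp only [C_add, C_mul, C_ofNat]
    ring
  exact hquad ▸ p.quadratic_dvd_of_aeval_eq_zero_im_ne_zero hz him

theorem X_sub_C_re_sq_add_C_im_sq_dvd_of_eval_nonneg {p : ℝ[X]} (hp : ∀ x, 0 ≤ p.eval x) {z : ℂ}
    (hz : aeval z p = 0) : (X - C z.re) ^ 2 + C z.im ^ 2 ∣ p := by
  rcases eq_or_ne z.im 0 with him | him
  · have hroot : p.IsRoot z.re := by
      refine isRoot_of_aeval_algebraMap_eq_zero (S := ℂ) ?_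
      rwa [Complex.coe_algebraMap, Complex.ext (Complex.ofReal_re z.re) him.symm]
    have hmin : IsLocalMin (fun x => p.eval x) z.re :=
      Eventually.of_forall fun x => hroot.eq_zero.trans_le (hp x)
    simpa [him] using X_sub_C_sq_dvd_of_isLocalExtr hroot (.inl hmin)
  · exact X_sub_C_re_sq_add_C_im_sq_dvd_of_im_ne_zero hz him

theorem eval_nonneg_of_eval_mul_nonneg {𝕜 : Type*} [Field 𝕜] [LinearOrder 𝕜]
    [IsStrictOrderedRing 𝕜] [TopologicalSpace 𝕜] [OrderTopology 𝕜] {p q : 𝕜[X]} (hp : p ≠ 0)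
    (hp_nonneg : ∀ x, 0 ≤ p.eval x) (hpq : ∀ x, 0 ≤ (p * q).eval x) (x : 𝕜) :
    0 ≤ q.eval x := by
  have hdense : Dense (Set.univ \ (p.roots.toFinset : Set 𝕜)) := dense_univ.sdiff_finset _
  have hclosed : IsClosed {y | 0 ≤ q.eval y} := isClosed_le continuous_const q.continuous
  refine hclosed.closure_subset_iff.2 (fun y hy => ?_) (hdense x)
  have hy_root : p.eval y ≠ 0 := by simpa [hp] using hy
  exact nonneg_of_mul_nonneg_right (eval_mul (p := p) ▸ hpq y)
    ((hp_nonneg y).lt_of_ne' hy_root)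

theorem exists_eq_sq_add_sq_of_eval_nonneg {p : ℝ[X]} (hp : ∀ x, 0 ≤ p.eval x) :
    ∃ a b : ℝ[X], p = a ^ 2 + b ^ 2 := by
  induction hn : p.natDegree using Nat.strong_induction_on generalizing p with
  | _ n ih =>
    subst hn
    by_cases hdeg : p.natDegree = 0
    · obtain ⟨c, rfl⟩ := natDegree_eq_zero.1 hdeg
      have hc : 0 ≤ c := by simpa using hp 0
      exact ⟨C √c, 0, by simp [← C_pow, Real.sq_sqrt hc]⟩
    · obtain ⟨z, hz⟩ :=
        IsAlgClosed.exists_aeval_eq_zero ℂ p (mt natDegree_eq_of_degree_eq_some hdeg)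
      obtain ⟨t, ht⟩ := X_sub_C_re_sq_add_C_im_sq_dvd_of_eval_nonneg hp hz
      set q : ℝ[X] := (X - C z.re) ^ 2 + C z.im ^ 2 with hq
      have hq_natDegree : q.natDegree = 2 := by
        rw [hq]
        compute_degree!
      have hq_ne : q ≠ 0 := ne_zero_of_natDegree_gt (hq_natDegree ▸ two_pos)
      have ht_ne : t ≠ 0 := by
        rintro rfl
        simp [ht] at hdeg
      have hq_nonneg (x : ℝ) : 0 ≤ q.eval x := by
        simp only [hq, eval_add, eval_pow, eval_sub, eval_X, eval_C]
        positivity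
      have ht_nonneg := eval_nonneg_of_eval_mul_nonneg hq_ne hq_nonneg (ht ▸ hp)
      have ht_lt : t.natDegree < p.natDegree := by
        rw [ht, natDegree_mul hq_ne ht_ne, hq_natDegree]
        lia
      obtain ⟨a, b, hab⟩ := ih _ ht_lt ht_nonneg rfl
      exact ht ▸ sq_add_sq_mul hq hab

theorem forall_eval_nonneg_iff_exists_eq_sq_add_sq {p : ℝ[X]} :
    (∀ x, 0 ≤ p.eval x) ↔ ∃ a b : ℝ[X], p = a ^ 2 + b ^ 2 := by
  refine ⟨exists_eq_sq_add_sq_of_eval_nonneg, ?_⟩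
  rintro ⟨a, b, rfl⟩ x
  simp only [eval_add, eval_pow]
  positivity

theorem monotone_eval_iff_derivative_eval_nonneg {p : ℝ[X]} :
    Monotone (fun x => p.eval x) ↔ ∀ x, 0 ≤ p.derivative.eval x := by
  simp only [← Polynomial.deriv]
  exact ⟨fun h _ => h.deriv_nonneg, monotone_of_deriv_nonneg p.differentiable⟩

theorem derivative_eq_iff_exists_eval_eq_add_integral {p q : ℝ[X]} (a : ℝ) :
    p.derivative = q ↔ ∃ c, ∀ z, p.eval z = c + ∫ u in a..z, q.eval u := by
  constructor
  · rintro rfl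
    refine ⟨p.eval a, fun z => ?_⟩
    rw [integral_eq_sub_of_hasDerivAt (fun x _ => p.hasDerivAt x)
      (p.derivative.continuous.intervalIntegrable a z), add_sub_cancel]
  · rintro ⟨c, hc⟩
    refine Polynomial.funext fun x => (p.hasDerivAt x).unique ?_
    rw [_root_.funext hc]
    exact (q.continuous.integral_hasStrictDerivAt a x).hasDerivAt.const_add c

end

theorem monotone_polynomial_iff_sos_integral (P : Polynomial ℝ) :
    Monotone (fun x : ℝ => P.eval x) ↔
      ∃ (c : ℝ) (p₁ p₂ : Polynomial ℝ), ∀ z : ℝ,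
        P.eval z = c + ∫ u in (0:ℝ)..z, ((p₁.eval u) ^ 2 + (p₂.eval u) ^ 2) := by
  calc Monotone (fun x : ℝ => P.eval x)
    _ ↔ ∀ x, 0 ≤ P.derivative.eval x := monotone_eval_iff_derivative_eval_nonneg
    _ ↔ ∃ p₁ p₂ : Polynomial ℝ, P.derivative = p₁ ^ 2 + p₂ ^ 2 :=
      forall_eval_nonneg_iff_exists_eq_sq_add_sq
    _ ↔ ∃ (p₁ p₂ : Polynomial ℝ) (c : ℝ), ∀ z : ℝ,
        P.eval z = c + ∫ u in (0:ℝ)..z, ((p₁.eval u) ^ 2 + (p₂.eval u) ^ 2) := by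
      simp only [derivative_eq_iff_exists_eval_eq_add_integral 0, Polynomial.eval_add,
        Polynomial.eval_pow]
    _ ↔ _ := ⟨fun ⟨p₁, p₂, c, h⟩ => ⟨c, p₁, p₂, h⟩, fun ⟨c, p₁, p₂, h⟩ => ⟨p₁, p₂, c, h⟩⟩
end

section
/- For every continuous nondecreasing function f : ℝ → ℝ, every compact set K ⊆ ℝ, and every ε > 0, there exists a real polynomial p that is nondecreasing on all of ℝ such that |f(x) − p(x)| ≤ ε for all x ∈ K. That is, the set of nondecreasing polynomials is dense in the cone of nondecreasing continuous functions ℝ → ℝ with respect to the topology of compact convergence (uniform convergence on compact sets). -/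
/-!
A continuously differentiable nondecreasing `g` is easy to approximate on `[a, b]`: by the
Weierstrass theorem `√g'` is close to a polynomial `q`, so an antiderivative of `q ^ 2` with the
right constant term is close to `g`, and it is nondecreasing on the whole line because its
derivative is a square.

A nondecreasing continuous `f` on a compact set `K` reduces to this case. Composing `f` with the
map sending `y` to the largest point of `K` below `y` extends it to a nondecreasing, possibly
discontinuous, function on the line, whose values on `[x, x + δ]` for `x ∈ K` are values of `f` at
points of `K ∩ [x, x + δ]`. Averaging this extension over `[x, x + δ / 2]` makes it continuous,
and averaging once more makes it continuously differentiable; both averages stay nondecreasing and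
by uniform continuity of `f` they remain close to `f` on `K`.
-/

open Set MeasureTheory

section PolynomialApproximation

open Polynomial

theorem polynomial_derivative_surjective {R : Type*} [DivisionSemiring R] [CharZero R] :
    Function.Surjective (derivative : R[X] → R[X]) := by
  intro q
  induction q using Polynomial.induction_on' with
  | add p q hp hq =>
    obtain ⟨P, rfl⟩ := hp
    obtain ⟨Q, rfl⟩ := hq
    exact ⟨P + Q, derivative_add⟩
  | monomial n a =>
    refine ⟨monomial (n + 1) (a / (n + 1 : ℕ)), ?_⟩
    rw [derivative_monomial, div_mul_cancel₀ _ (Nat.cast_ne_zero.mpr n.succ_ne_zero),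
      Nat.add_sub_cancel]

theorem exists_polynomial_sq_near_of_continuousOn {K : Set ℝ} (hK : IsCompact K) {u : ℝ → ℝ}
    (hu : ContinuousOn u K) (hu_nonneg : ∀ x ∈ K, 0 ≤ u x) {ε : ℝ} (hε : 0 < ε) :
    ∃ q : ℝ[X], ∀ x ∈ K, |q.eval x ^ 2 - u x| < ε := by
  have : CompactSpace K := isCompact_iff_compactSpace.mp hK
  let s : C(K, ℝ) := ⟨fun x => √(u x), hu.domRestrict.sqrt⟩
  have hdense : Dense (polynomialFunctions K : Set C(K, ℝ)) := by
    rw [dense_iff_closure_eq, ← Subalgebra.topologicalClosure_coe,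
      polynomialFunctions.topologicalClosure, Algebra.coe_top]
  have hopen : IsOpen {v : C(K, ℝ) | dist (v ^ 2) (s ^ 2) < ε} :=
    isOpen_lt (by fun_prop) continuous_const
  obtain ⟨_, ⟨q, -, rfl⟩, hq⟩ := hdense.exists_mem_open hopen ⟨s, by simpa using hε⟩
  refine ⟨q, fun x hx => ?_⟩
  have hs : s ⟨x, hx⟩ ^ 2 = u x := Real.sq_sqrt (hu_nonneg x hx)
  simpa [hs, Real.dist_eq] using
    (ContinuousMap.dist_apply_le_dist ⟨x, hx⟩).trans_lt hq

theorem exists_monotone_polynomial_near_of_contDiffOn {a b : ℝ} (hab : a < b) {g : ℝ → ℝ}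
    (hg : ContDiffOn ℝ 1 g (Icc a b)) (hg_mono : MonotoneOn g (Icc a b)) {ε : ℝ} (hε : 0 < ε) :
    ∃ p : ℝ[X], Monotone (fun x => p.eval x) ∧ ∀ x ∈ Icc a b, |p.eval x - g x| ≤ ε := by
  have hba : 0 < b - a := sub_pos.mpr hab
  obtain ⟨q, hq⟩ := exists_polynomial_sq_near_of_continuousOn isCompact_Icc
    (hg.continuousOn_derivWithin (uniqueDiffOn_Icc hab) le_rfl)
    (fun _ _ => hg_mono.derivWithin_nonneg) (div_pos hε hba)
  obtain ⟨P, hP⟩ := polynomial_derivative_surjective (q ^ 2)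
  let p : ℝ[X] := P + C (g a - P.eval a)
  have hp_deriv (x : ℝ) : HasDerivAt (fun y => p.eval y) (q.eval x ^ 2) x := by
    simpa [p, hP] using p.hasDerivAt x
  have hpa : p.eval a = g a := by simp [p]
  refine ⟨p, monotone_of_hasDerivAt_nonneg hp_deriv fun x => sq_nonneg _, fun x hx => ?_⟩
  have hmvt := norm_image_sub_le_of_norm_deriv_le_segment'
    (fun y hy => (hp_deriv y).hasDerivWithinAt.sub
      (hg.differentiableOn one_ne_zero y hy).hasDerivWithinAt)
    (fun y hy => (hq y (Ico_subset_Icc_self hy)).le) x hx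
  calc |p.eval x - g x| ≤ ε / (b - a) * (x - a) := by simpa [hpa] using hmvt
    _ ≤ ε / (b - a) * (b - a) := by gcongr; exact hx.2
    _ = ε := div_mul_cancel₀ ε hba.ne'

end PolynomialApproximation

section SteklovMean

/-- The (forward) Steklov mean of `g` with step `h`: its average over the segment from `x` to
`x + h`, used to smooth `g`. The segment is parametrized by `[0, 1]`, so that monotonicity in `x`
is read off pointwise and no division by `h` occurs. -/
noncomputable def steklovMean (h : ℝ) (g : ℝ → ℝ) (x : ℝ) : ℝ :=
  ∫ t in (0 : ℝ)..1, g (x + h * t)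

variable {h : ℝ} {g : ℝ → ℝ}

theorem intervalIntegrable_comp_add_mul_of_monotone (hg : Monotone g) (hh : 0 ≤ h) (x a b : ℝ) :
    IntervalIntegrable (fun t => g (x + h * t)) volume a b :=
  Monotone.intervalIntegrable fun _ _ hst => hg (by gcongr)

theorem monotone_steklovMean (hg : Monotone g) (hh : 0 ≤ h) : Monotone (steklovMean h g) :=
  fun x y hxy => intervalIntegral.integral_mono zero_le_one
    (intervalIntegrable_comp_add_mul_of_monotone hg hh x 0 1)
    (intervalIntegrable_comp_add_mul_of_monotone hg hh y 0 1) fun _ => hg (by gcongr)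

theorem le_steklovMean (hg : Monotone g) (hh : 0 ≤ h) (x : ℝ) : g x ≤ steklovMean h g x := by
  calc g x = ∫ _ in (0 : ℝ)..1, g x := by simp
    _ ≤ steklovMean h g x :=
      intervalIntegral.integral_mono_on zero_le_one intervalIntegrable_const
        (intervalIntegrable_comp_add_mul_of_monotone hg hh x 0 1) fun _ ht =>
          hg (le_add_of_nonneg_right (mul_nonneg hh ht.1))

theorem steklovMean_le (hg : Monotone g) (hh : 0 ≤ h) (x : ℝ) :
    steklovMean h g x ≤ g (x + h) := by
  calc steklovMean h g x ≤ ∫ _ in (0 : ℝ)..1, g (x + h) :=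
      intervalIntegral.integral_mono_on zero_le_one
        (intervalIntegrable_comp_add_mul_of_monotone hg hh x 0 1) intervalIntegrable_const
        fun _ ht => hg (by gcongr; exact mul_le_of_le_one_right hh ht.2)
    _ = g (x + h) := by simp

theorem steklovMean_eq_primitive_sub (hg : ∀ a b, IntervalIntegrable g volume a b) (hh : h ≠ 0)
    (x : ℝ) :
    steklovMean h g x = ((∫ t in (0 : ℝ)..x + h, g t) - ∫ t in (0 : ℝ)..x, g t) / h := by
  rw [steklovMean, intervalIntegral.integral_comp_add_mul _ hh,
    intervalIntegral.integral_interval_sub_left (hg _ _) (hg _ _), mul_zero, add_zero, mul_one,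
    smul_eq_mul, inv_mul_eq_div]

theorem continuous_steklovMean (hg : ∀ a b, IntervalIntegrable g volume a b) (hh : h ≠ 0) :
    Continuous (steklovMean h g) := by
  have hprim := intervalIntegral.continuous_primitive hg 0
  rw [funext (steklovMean_eq_primitive_sub hg hh)]
  exact ((hprim.comp (continuous_add_const h)).sub hprim).div_const h

theorem hasDerivAt_steklovMean (hg : Continuous g) (hh : h ≠ 0) (x : ℝ) :
    HasDerivAt (steklovMean h g) ((g (x + h) - g x) / h) x := by
  have hprim (y : ℝ) := (hg.integral_hasStrictDerivAt 0 y).hasDerivAt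
  rw [funext (steklovMean_eq_primitive_sub hg.intervalIntegrable hh)]
  exact (((hprim (x + h)).comp_add_const x h).sub (hprim x)).div_const h

theorem contDiff_one_steklovMean (hg : Continuous g) (hh : h ≠ 0) :
    ContDiff ℝ 1 (steklovMean h g) := by
  have hderiv := hasDerivAt_steklovMean hg hh
  refine contDiff_one_iff_deriv.mpr ⟨fun x => (hderiv x).differentiableAt, ?_⟩
  rw [funext fun x => (hderiv x).deriv]
  fun_prop

theorem exists_contDiff_one_monotone_between (hg : Monotone g) {δ : ℝ} (hδ : 0 < δ) :
    ∃ G : ℝ → ℝ, ContDiff ℝ 1 G ∧ Monotone G ∧ ∀ x, G x ∈ Icc (g x) (g (x + δ)) := by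
  have hh : 0 < δ / 2 := half_pos hδ
  have hmean : Monotone (steklovMean (δ / 2) g) := monotone_steklovMean hg hh.le
  have hmean_cont : Continuous (steklovMean (δ / 2) g) :=
    continuous_steklovMean (fun _ _ => hg.intervalIntegrable) hh.ne'
  refine ⟨steklovMean (δ / 2) (steklovMean (δ / 2) g), contDiff_one_steklovMean hmean_cont hh.ne',
    monotone_steklovMean hmean hh.le, fun x => ⟨?_, ?_⟩⟩
  · exact (le_steklovMean hg hh.le x).trans (le_steklovMean hmean hh.le x)
  · calc steklovMean (δ / 2) (steklovMean (δ / 2) g) x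
        ≤ steklovMean (δ / 2) g (x + δ / 2) := steklovMean_le hmean hh.le x
      _ ≤ g (x + δ / 2 + δ / 2) := steklovMean_le hg hh.le _
      _ = g (x + δ) := by rw [add_assoc, add_halves]

end SteklovMean

section CompactDomain

theorem exists_monotone_retraction_of_isCompact {α : Type*} [LinearOrder α]
    [TopologicalSpace α] [OrderClosedTopology α] {K : Set α} (hK : IsCompact K) (hne : K.Nonempty) :
    ∃ r : α → α, Monotone r ∧ (∀ y, r y ∈ K) ∧ ∀ x ∈ K, ∀ y, x ≤ y → r y ∈ Icc x y := by
  obtain ⟨m, hmK, hm⟩ := hK.exists_isLeast hne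
  -- Truncating at the least point `m` of `K` keeps `K ∩ Iic (max m y)` nonempty.
  have hgreatest (y : α) : ∃ z, IsGreatest (K ∩ Iic (max m y)) z :=
    (hK.inter_right isClosed_Iic).exists_isGreatest ⟨m, hmK, le_max_left m y⟩
  choose r hr using hgreatest
  refine ⟨r, fun y z hyz => (hr y).mono (hr z) (by gcongr), fun y => (hr y).1.1,
    fun x hx y hxy => ⟨(hr y).2 ⟨hx, hxy.trans (le_max_right m y)⟩, ?_⟩⟩
  exact (hr y).1.2.trans (max_le ((hm hx).trans hxy) le_rfl)

variable {f : ℝ → ℝ} {K : Set ℝ}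

theorem exists_contDiff_one_monotone_near_of_monotoneOn (hK : IsCompact K)
    (hf_cont : ContinuousOn f K) (hf_mono : MonotoneOn f K) {ε : ℝ} (hε : 0 < ε) :
    ∃ g : ℝ → ℝ, ContDiff ℝ 1 g ∧ Monotone g ∧ ∀ x ∈ K, |f x - g x| ≤ ε := by
  rcases K.eq_empty_or_nonempty with rfl | hne
  · exact ⟨fun _ => 0, contDiff_const, monotone_const, by simp⟩
  obtain ⟨r, hr_mono, hrK, hr⟩ := exists_monotone_retraction_of_isCompact hK hne
  obtain ⟨δ, hδ, hfδ⟩ := Metric.uniformContinuousOn_iff_le.mp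
    (hK.uniformContinuousOn_of_continuous hf_cont) ε hε
  have hfr_mono : Monotone (f ∘ r) := fun y z hyz => hf_mono (hrK y) (hrK z) (hr_mono hyz)
  obtain ⟨g, hg, hg_mono, hg_mem⟩ := exists_contDiff_one_monotone_between hfr_mono hδ
  refine ⟨g, hg, hg_mono, fun x hx => ?_⟩
  have hrx : r x = x := by simpa using hr x hx x le_rfl
  have hrδ : r (x + δ) ∈ Icc x (x + δ) := hr x hx _ (le_add_of_nonneg_right hδ.le)
  have hlower : f x ≤ g x := by simpa [hrx] using (hg_mem x).1
  have hupper : g x ≤ f (r (x + δ)) := (hg_mem x).2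
  have hclose : |f x - f (r (x + δ))| ≤ ε := by
    refine hfδ x hx _ (hrK _) ?_
    rw [dist_comm, Real.dist_eq, abs_of_nonneg (sub_nonneg.mpr hrδ.1)]
    linarith [hrδ.2]
  rw [abs_le] at hclose ⊢
  constructor <;> linarith

theorem monotone_polynomials_dense_in_monotone_continuous_general (hK : IsCompact K)
    (hf_cont : ContinuousOn f K) (hf_mono : MonotoneOn f K) {ε : ℝ} (hε : 0 < ε) :
    ∃ p : Polynomial ℝ, Monotone (fun x : ℝ => p.eval x) ∧
      ∀ x ∈ K, |f x - p.eval x| ≤ ε := by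
  obtain ⟨g, hg, hg_mono, hfg⟩ :=
    exists_contDiff_one_monotone_near_of_monotoneOn hK hf_cont hf_mono (half_pos hε)
  obtain ⟨R, hR, hKR⟩ := hK.isBounded.exists_pos_norm_le
  obtain ⟨p, hp_mono, hpg⟩ := exists_monotone_polynomial_near_of_contDiffOn
    (neg_lt_self hR) hg.contDiffOn (hg_mono.monotoneOn _) (half_pos hε)
  refine ⟨p, hp_mono, fun x hx => ?_⟩
  calc |f x - p.eval x| ≤ |f x - g x| + |g x - p.eval x| := abs_sub_le _ _ _
    _ ≤ ε / 2 + ε / 2 := by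
      rw [abs_sub_comm (g x)]
      exact add_le_add (hfg x hx) (hpg x (abs_le.mp (hKR x hx)))
    _ = ε := add_halves ε

end CompactDomain

theorem monotone_polynomials_dense_in_monotone_continuous
    (f : ℝ → ℝ) (hf_cont : Continuous f) (hf_mono : Monotone f)
    (K : Set ℝ) (hK : IsCompact K) (ε : ℝ) (hε : 0 < ε) :
    ∃ p : Polynomial ℝ, Monotone (fun x : ℝ => p.eval x) ∧
      ∀ x ∈ K, |f x - p.eval x| ≤ ε :=
  monotone_polynomials_dense_in_monotone_continuous_general hK hf_cont.continuousOn
    (hf_mono.monotoneOn K) hε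
end

section
/- Let p and q be probability density functions on ℝ^d with respect to Lebesgue measure, with corresponding probability measures μ and ν. If T₁ and T₂ are two increasing triangular maps ℝ^d → ℝ^d each pushing μ forward to ν, then T₁ = T₂ μ-almost everywhere. -/
open MeasureTheory

/-- A map `T : ℝ^d → ℝ^d` is triangular if its `j`-th component depends only on
the first `j` coordinates `x 0, …, x j`. -/
def IsTriangularMap {d : ℕ} (T : (Fin d → ℝ) → Fin d → ℝ) : Prop :=
  ∀ (j : Fin d) (x y : Fin d → ℝ), (∀ i, i ≤ j → x i = y i) → T x j = T y j

/-- A triangular map is increasing if each component is nondecreasing in its last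
relevant coordinate, the previous coordinates being fixed. -/
def IsIncreasingTriangular {d : ℕ} (T : (Fin d → ℝ) → Fin d → ℝ) : Prop :=
  ∀ (j : Fin d) (x y : Fin d → ℝ), (∀ i, i < j → x i = y i) → x j ≤ y j → T x j ≤ T y j

/-!
Suppose `T` is increasing triangular and pushes `μ` to a measure which does not charge graphs
`y_j = h(y_{<j})`. If `x_{<j}` can be recovered from `T(x)_{<j}`, then for each rational `r` the
points with `T_j(x_{<j}, r) = T_j(x)` are mapped into such a graph, hence form a null set. So
almost surely `x` lies on no flat piece of `t ↦ T_j(x_{<j}, t)`, and `x_j` can be recovered too.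

Two such maps `T₁`, `T₂` with the same image measure are then compared coordinate by coordinate.
If they agree on the coordinates before `j`, recovering `x_{<j}` from the image shows that
`(x_{<j}, T₁(x)_j)` and `(x_{<j}, T₂(x)_j)` have the same law. Conditionally on `x_{<j}`, both
`j`-th components are monotone functions of `x_j` with the same law: their sublevel sets are
nested and of equal mass, so the two functions agree almost everywhere.
-/

open ProbabilityTheory Set Function

section General

variable {α β γ : Type*} [MeasurableSpace α] [MeasurableSpace β] [MeasurableSpace γ]

lemma pi_eq_zero_of_forall_update_preimage_eq_zero {ι : Type*} [Fintype ι] [DecidableEq ι]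
    {X : ι → Type*} [∀ i, MeasurableSpace (X i)] (ρ : ∀ i, Measure (X i)) [∀ i, SigmaFinite (ρ i)]
    (j : ι) {N : Set (∀ i, X i)} (hN : MeasurableSet N)
    (hN₀ : ∀ x, ρ j (update x j ⁻¹' N) = 0) : Measure.pi ρ N = 0 := by
  have slice_integral (x : ∀ i, X i) :
      ∫⁻ t, N.indicator 1 (update x j t) ∂ρ j = 0 := by
    rw [← hN₀ x, ← lintegral_indicator_one (measurable_update x hN)]
    rfl
  obtain hX | ⟨⟨x₀⟩⟩ := isEmpty_or_nonempty (∀ i, X i)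
  · simp [Set.eq_empty_of_isEmpty N]
  · rw [← lintegral_indicator_one hN, lintegral_eq_lmarginal_univ x₀,
      lmarginal_erase' _ (measurable_one.indicator hN) (Finset.mem_univ j)]
    simp only [slice_integral, lmarginal, lintegral_zero]

lemma pi_graph_eq_zero {ι : Type*} [Fintype ι] [DecidableEq ι]
    {X : ι → Type*} [∀ i, MeasurableSpace (X i)] (ρ : ∀ i, Measure (X i)) [∀ i, SigmaFinite (ρ i)]
    (j : ι) [NullSingletonClass (ρ j)] [MeasurableEq (X j)] {h : (∀ i, X i) → X j}
    (hm : Measurable h) (hupdate : ∀ x t, h (update x j t) = h x) :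
    Measure.pi ρ {x | x j = h x} = 0 := by
  refine pi_eq_zero_of_forall_update_preimage_eq_zero ρ j
    (measurableSet_eq_fun (measurable_pi_apply j) hm) fun x => ?_
  simp only [preimage_ofPred_eq, update_self, hupdate]
  exact measure_singleton (h x)

lemma exists_measurable_leftInvOn [StandardBorelSpace α] [Nonempty α]
    [MeasurableSpace.CountablySeparated β] {f : α → β} (hf : Measurable f) {s : Set α}
    (hs : MeasurableSet s) (hinj : InjOn f s) : ∃ g : β → α, Measurable g ∧ LeftInvOn g f s := by
  have := hs.standardBorel
  have hemb : MeasurableEmbedding (s.domRestrict f) :=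
    (hf.comp measurable_subtype_coe).measurableEmbedding hinj.injective
  obtain ⟨g, hg, hgf⟩ :=
    hemb.exists_measurable_extend measurable_subtype_coe fun _ => inferInstance
  exact ⟨g, hg, fun x hx => congrFun hgf ⟨x, hx⟩⟩

lemma kernel_id_prod_map_apply (κ : Kernel α β) [IsSFiniteKernel κ] {f : α × β → γ}
    (hf : Measurable f) (a : α) : (Kernel.id ×ₖ κ).map f a = (κ a).map fun b => f (a, b) := by
  rw [Kernel.map_apply _ hf, Kernel.prod_apply, Kernel.id_apply, Measure.dirac_prod,
    Measure.map_map hf measurable_prodMk_left]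
  rfl

lemma map_fst_prodMk_compProd (μ : Measure α) [SFinite μ] (κ : Kernel α β) [IsSFiniteKernel κ]
    {f : α × β → γ} (hf : Measurable f) :
    (μ ⊗ₘ κ).map (fun p => (p.1, f p)) = μ ⊗ₘ (Kernel.id ×ₖ κ).map f := by
  have hpair : Measurable fun p : α × β => (p.1, f p) := by fun_prop
  ext s hs
  rw [Measure.map_apply hpair hs, Measure.compProd_apply hs, Measure.compProd_apply (hpair hs)]
  refine lintegral_congr fun a => ?_
  rw [kernel_id_prod_map_apply κ hf, Measure.map_apply (by fun_prop) (measurable_prodMk_left hs)]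
  rfl

variable [LinearOrder β] [LinearOrder γ] [TopologicalSpace γ] [OrderTopology γ]
  [SecondCountableTopology γ] [BorelSpace γ]

lemma ae_eq_of_monotone_of_map_eq {κ : Measure β} [IsFiniteMeasure κ] {f g : β → γ}
    (hf : Measurable f) (hg : Measurable g) (hf_mono : Monotone f) (hg_mono : Monotone g)
    (hmap : κ.map f = κ.map g) : f =ᵐ[κ] g := by
  refine Filter.EventuallyEq.of_forall_separating_preimage (· ∈ range (Iic : γ → Set γ)) ?_
  rintro _ ⟨c, rfl⟩
  have hmeas : κ (f ⁻¹' Iic c) = κ (g ⁻¹' Iic c) := by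
    rw [← Measure.map_apply hf measurableSet_Iic, hmap, Measure.map_apply hg measurableSet_Iic]
  obtain hsub | hsub :=
    ((isLowerSet_Iic c).preimage hf_mono).total ((isLowerSet_Iic c).preimage hg_mono)
  · exact ae_eq_of_subset_of_measure_ge hsub hmeas.ge
      (hf measurableSet_Iic).nullMeasurableSet (measure_ne_top _ _)
  · exact (ae_eq_of_subset_of_measure_ge hsub hmeas.le
      (hg measurableSet_Iic).nullMeasurableSet (measure_ne_top _ _)).symm

lemma ae_eq_of_fibrewise_monotone_of_map_eq [StandardBorelSpace β]
    {ρ : Measure (α × β)} [IsFiniteMeasure ρ] {f g : α × β → γ}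
    (hf : Measurable f) (hg : Measurable g)
    (hf_mono : ∀ a, Monotone fun t => f (a, t)) (hg_mono : ∀ a, Monotone fun t => g (a, t))
    (hmap : ρ.map (fun p => (p.1, f p)) = ρ.map (fun p => (p.1, g p))) : f =ᵐ[ρ] g := by
  obtain hβ | hβ := isEmpty_or_nonempty β
  · exact .of_forall fun p => isEmptyElim p.2
  rw [← ρ.disintegrate ρ.condKernel] at hmap ⊢
  rw [map_fst_prodMk_compProd _ _ hf, map_fst_prodMk_compProd _ _ hg] at hmap
  have hfibre := Kernel.ae_eq_of_compProd_eq hmap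
  refine (Measure.ae_compProd_iff (measurableSet_eq_fun hf hg)).2 ?_
  filter_upwards [hfibre] with a ha
  rw [kernel_id_prod_map_apply _ hf, kernel_id_prod_map_apply _ hg] at ha
  exact ae_eq_of_monotone_of_map_eq (hf.comp measurable_prodMk_left)
    (hg.comp measurable_prodMk_left) (hf_mono a) (hg_mono a) ha

lemma ae_eq_of_fibrewise_monotone_of_map_prodMk_eq [StandardBorelSpace β]
    {Ω : Type*} [MeasurableSpace Ω] {μ : Measure Ω} [IsFiniteMeasure μ]
    {X : Ω → α} {Y : Ω → β} (hX : Measurable X) (hY : Measurable Y) {f g : α × β → γ}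
    (hf : Measurable f) (hg : Measurable g)
    (hf_mono : ∀ a, Monotone fun t => f (a, t)) (hg_mono : ∀ a, Monotone fun t => g (a, t))
    (hmap : μ.map (fun ω => (X ω, f (X ω, Y ω))) = μ.map (fun ω => (X ω, g (X ω, Y ω)))) :
    ∀ᵐ ω ∂μ, f (X ω, Y ω) = g (X ω, Y ω) := by
  have hXY : Measurable fun ω => (X ω, Y ω) := hX.prodMk hY
  refine ae_of_ae_map hXY.aemeasurable
    (ae_eq_of_fibrewise_monotone_of_map_eq hf hg hf_mono hg_mono ?_)
  rw [Measure.map_map (by fun_prop) hXY, Measure.map_map (by fun_prop) hXY]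
  exact hmap

end General

section Triangular

variable {d : ℕ}

/-- The initial coordinates `x_{<j}` of `x`, padded with zeros so as to stay in `ℝ^d`. -/
noncomputable def truncate (j : Fin d) (x : Fin d → ℝ) : Fin d → ℝ := (Iio j).indicator x

lemma truncate_apply_of_lt {i j : Fin d} (hij : i < j) (x : Fin d → ℝ) : truncate j x i = x i :=
  indicator_of_mem (mem_Iio.2 hij) x

lemma truncate_eq_truncate_iff {j : Fin d} {x y : Fin d → ℝ} :
    truncate j x = truncate j y ↔ ∀ i < j, x i = y i :=
  ⟨fun hxy i hi => by rw [← truncate_apply_of_lt hi x, hxy, truncate_apply_of_lt hi],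
    fun hxy => indicator_congr hxy⟩

lemma truncate_truncate (j : Fin d) (x : Fin d → ℝ) : truncate j (truncate j x) = truncate j x :=
  truncate_eq_truncate_iff.2 fun _ hi => truncate_apply_of_lt hi x

lemma truncate_update (j : Fin d) (x : Fin d → ℝ) (t : ℝ) :
    truncate j (update x j t) = truncate j x :=
  truncate_eq_truncate_iff.2 fun _ hi => update_of_ne hi.ne t x

@[fun_prop]
lemma measurable_truncate (j : Fin d) : Measurable (truncate j) := by
  refine measurable_pi_lambda _ fun i => ?_
  by_cases hij : i < j
  · simpa only [truncate_apply_of_lt hij] using measurable_pi_apply i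
  · simp only [truncate, indicator_of_notMem (notMem_Iio.2 (not_lt.1 hij)), measurable_const]

/-- The point `x` lies on no flat piece of the monotone function `t ↦ T_j(x_{<j}, t)`. Testing
rational parameters suffices to separate points and keeps the condition measurable; the price is
that no point with rational `x_j` is strict. -/
def IsStrictPoint (T : (Fin d → ℝ) → Fin d → ℝ) (j : Fin d) (x : Fin d → ℝ) : Prop :=
  ∀ r : ℚ, T (update x j (r : ℝ)) j ≠ T x j

lemma measurableSet_isStrictPoint {T : (Fin d → ℝ) → Fin d → ℝ} (hT : Measurable T) (j : Fin d) :
    MeasurableSet {x | IsStrictPoint T j x} := by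
  simp only [IsStrictPoint, ofPred_forall]
  refine MeasurableSet.iInter fun r => (measurableSet_eq_fun ?_ ?_).compl <;> fun_prop

lemma map_truncate_prodMk_apply {μ : Measure (Fin d → ℝ)} {T ψ : (Fin d → ℝ) → Fin d → ℝ}
    (hT : Measurable T) (hψ : Measurable ψ) {j : Fin d}
    (hψT : ∀ᵐ x ∂μ, ψ (truncate j (T x)) = truncate j x) :
    μ.map (fun x => (truncate j x, T x j)) =
      (μ.map T).map (fun y => (ψ (truncate j y), y j)) := by
  rw [Measure.map_map (by fun_prop) hT]
  refine Measure.map_congr ?_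
  filter_upwards [hψT] with x hx
  rw [comp_apply, hx]

lemma IsTriangularMap.apply_update_truncate {T : (Fin d → ℝ) → Fin d → ℝ}
    (hT : IsTriangularMap T) {i j : Fin d} (hij : i ≤ j) (x : Fin d → ℝ) (t : ℝ) :
    T (update (truncate j x) i t) i = T (update x i t) i := by
  refine hT i _ _ fun k hk => ?_
  obtain rfl | hki := eq_or_ne k i
  · simp only [update_self]
  · rw [update_of_ne hki, update_of_ne hki, truncate_apply_of_lt ((hk.lt_of_ne hki).trans_le hij)]

lemma IsTriangularMap.apply_truncate {T : (Fin d → ℝ) → Fin d → ℝ} (hT : IsTriangularMap T)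
    {i j : Fin d} (hij : i < j) (x : Fin d → ℝ) : T (truncate j x) i = T x i :=
  hT i _ _ fun _ hk => truncate_apply_of_lt (hk.trans_lt hij) x

lemma IsTriangularMap.isStrictPoint_truncate_iff {T : (Fin d → ℝ) → Fin d → ℝ}
    (hT : IsTriangularMap T) {i j : Fin d} (hij : i < j) {x : Fin d → ℝ} :
    IsStrictPoint T i (truncate j x) ↔ IsStrictPoint T i x := by
  simp only [IsStrictPoint, hT.apply_update_truncate hij.le, hT.apply_truncate hij]

namespace IsIncreasingTriangular

variable {T : (Fin d → ℝ) → Fin d → ℝ}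

lemma isTriangularMap (hT : IsIncreasingTriangular T) : IsTriangularMap T := fun j x y hxy =>
  le_antisymm (hT j x y (fun i hi => hxy i hi.le) (hxy j le_rfl).le)
    (hT j y x (fun i hi => (hxy i hi.le).symm) (hxy j le_rfl).ge)

lemma monotone_apply_update (hT : IsIncreasingTriangular T) (a : Fin d → ℝ) (j : Fin d) :
    Monotone fun t => T (update a j t) j := fun s t hst =>
  hT j _ _ (fun i hi => by rw [update_of_ne hi.ne, update_of_ne hi.ne])
    (by simpa only [update_self] using hst)

lemma apply_lt_apply (hT : IsIncreasingTriangular T) {j : Fin d} {x y : Fin d → ℝ}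
    (hx : IsStrictPoint T j x) (hxy : ∀ i < j, x i = y i) (hlt : x j < y j) : T x j < T y j := by
  obtain ⟨r, hxr, hry⟩ := exists_rat_btwn hlt
  calc T x j < T (update x j (r : ℝ)) j := by
        refine (hT j _ _ (fun i hi => (update_of_ne hi.ne _ _).symm) ?_).lt_of_ne (hx r).symm
        simpa only [update_self] using hxr.le
    _ ≤ T y j := by
        refine hT j _ _ (fun i hi => by rw [update_of_ne hi.ne, hxy i hi]) ?_
        simpa only [update_self] using hry.le

lemma eq_of_apply_eq (hT : IsIncreasingTriangular T) {j : Fin d} {x y : Fin d → ℝ}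
    (hx : ∀ i < j, IsStrictPoint T i x) (hy : ∀ i < j, IsStrictPoint T i y)
    (hTxy : ∀ i < j, T x i = T y i) : ∀ i < j, x i = y i := by
  intro i
  induction i using WellFoundedLT.induction with
  | ind i ih =>
    intro hi
    have hxy : ∀ k < i, x k = y k := fun k hk => ih k hk (hk.trans hi)
    refine le_antisymm (not_lt.1 fun hlt => ?_) (not_lt.1 fun hlt => ?_)
    · exact (hT.apply_lt_apply (hy i hi) (fun k hk => (hxy k hk).symm) hlt).ne (hTxy i hi).symm
    · exact (hT.apply_lt_apply (hx i hi) hxy hlt).ne (hTxy i hi)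

variable {μ : Measure (Fin d → ℝ)}

lemma exists_measurable_truncate_eq (hT : IsIncreasingTriangular T) (hTm : Measurable T)
    {j : Fin d} (hstrict : ∀ i < j, ∀ᵐ x ∂μ, IsStrictPoint T i x) :
    ∃ ψ : (Fin d → ℝ) → Fin d → ℝ, Measurable ψ ∧
      ∀ᵐ x ∂μ, ψ (truncate j (T x)) = truncate j x := by
  let S : Set (Fin d → ℝ) := {x | truncate j x = x} ∩ ⋂ i, ⋂ _ : i < j, {x | IsStrictPoint T i x}
  have mem_S {x : Fin d → ℝ} : x ∈ S ↔ truncate j x = x ∧ ∀ i < j, IsStrictPoint T i x := by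
    simp only [S, mem_inter_iff, mem_ofPred_eq, mem_iInter]
  have hS : MeasurableSet S :=
    (measurableSet_eq_fun (measurable_truncate j) measurable_id).inter <|
      .iInter fun i => .iInter fun _ => measurableSet_isStrictPoint hTm i
  have hinj : InjOn (fun x => truncate j (T x)) S := fun x hx y hy hxy => by
    rw [mem_S] at hx hy
    rw [← hx.1, ← hy.1, truncate_eq_truncate_iff]
    exact hT.eq_of_apply_eq hx.2 hy.2 (truncate_eq_truncate_iff.1 hxy)
  obtain ⟨ψ, hψ, hψS⟩ :=
    exists_measurable_leftInvOn ((measurable_truncate j).comp hTm) hS hinj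
  refine ⟨ψ, hψ, ?_⟩
  filter_upwards [ae_all_iff.2 fun i => ae_all_iff.2 (hstrict i)] with x hx
  have hxS : truncate j x ∈ S := mem_S.2 ⟨truncate_truncate j x, fun i hi =>
    (hT.isTriangularMap.isStrictPoint_truncate_iff hi).2 (hx i hi)⟩
  have hTx : truncate j (T (truncate j x)) = truncate j (T x) :=
    truncate_eq_truncate_iff.2 fun i hi => hT.isTriangularMap.apply_truncate hi x
  rw [← hTx]
  exact hψS hxS

variable {ρ : Fin d → Measure ℝ} [∀ i, SigmaFinite (ρ i)] [∀ i, NullSingletonClass (ρ i)]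

lemma ae_isStrictPoint (hT : IsIncreasingTriangular T) (hTm : Measurable T)
    (hac : μ.map T ≪ Measure.pi ρ) (j : Fin d) : ∀ᵐ x ∂μ, IsStrictPoint T j x := by
  induction j using WellFoundedLT.induction with
  | ind j ih =>
    obtain ⟨ψ, hψ, hψT⟩ := hT.exists_measurable_truncate_eq hTm ih
    refine ae_all_iff.2 fun r => ?_
    let h : (Fin d → ℝ) → ℝ := fun y => T (update (ψ (truncate j y)) j (r : ℝ)) j
    have hh : Measurable h := by fun_prop
    -- `hψT` rewrites the equation `T_j(x) = T_j(x_{<j}, r)` as one for `T x` alone.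
    have hgraph : ∀ᵐ y ∂μ.map T, y j ≠ h y := by
      refine hac.ae_le (measure_eq_zero_iff_ae_notMem.1 (pi_graph_eq_zero ρ j hh fun y t => ?_))
      simp only [h, truncate_update]
    filter_upwards [ae_of_ae_map hTm.aemeasurable hgraph, hψT] with x hne hx
    simp only [h, hx, hT.isTriangularMap.apply_update_truncate le_rfl] at hne
    exact hne.symm

lemma ae_apply_eq_of_map_truncate_eq [IsFiniteMeasure μ] {T₁ T₂ : (Fin d → ℝ) → Fin d → ℝ}
    (h₁ : IsIncreasingTriangular T₁) (h₂ : IsIncreasingTriangular T₂)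
    (h₁m : Measurable T₁) (h₂m : Measurable T₂) {j : Fin d}
    (hmap : μ.map (fun x => (truncate j x, T₁ x j)) = μ.map (fun x => (truncate j x, T₂ x j))) :
    ∀ᵐ x ∂μ, T₁ x j = T₂ x j := by
  let fibre (T : (Fin d → ℝ) → Fin d → ℝ) (p : (Fin d → ℝ) × ℝ) : ℝ := T (update p.1 j p.2) j
  have measurable_fibre {T : (Fin d → ℝ) → Fin d → ℝ} (hT : Measurable T) :
      Measurable (fibre T) := by fun_prop
  have fibre_truncate {T : (Fin d → ℝ) → Fin d → ℝ} (hT : IsIncreasingTriangular T)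
      (x : Fin d → ℝ) : fibre T (truncate j x, x j) = T x j := by
    simp only [fibre, hT.isTriangularMap.apply_update_truncate le_rfl, update_eq_self]
  simpa only [fibre_truncate h₁, fibre_truncate h₂] using
    ae_eq_of_fibrewise_monotone_of_map_prodMk_eq (measurable_truncate j) (measurable_pi_apply j)
      (measurable_fibre h₁m) (measurable_fibre h₂m) (fun a => h₁.monotone_apply_update a j)
      (fun a => h₂.monotone_apply_update a j)
      (by simpa only [fibre_truncate h₁, fibre_truncate h₂] using hmap)

lemma ae_apply_eq_of_ae_forall_lt [IsFiniteMeasure μ] {T₁ T₂ : (Fin d → ℝ) → Fin d → ℝ}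
    (h₁ : IsIncreasingTriangular T₁) (h₂ : IsIncreasingTriangular T₂)
    (h₁m : Measurable T₁) (h₂m : Measurable T₂) (hmap : μ.map T₁ = μ.map T₂)
    (hac : μ.map T₁ ≪ Measure.pi ρ) {j : Fin d} (hlt : ∀ i < j, ∀ᵐ x ∂μ, T₁ x i = T₂ x i) :
    ∀ᵐ x ∂μ, T₁ x j = T₂ x j := by
  obtain ⟨ψ, hψ, hψT₁⟩ :=
    h₁.exists_measurable_truncate_eq h₁m fun i _ => h₁.ae_isStrictPoint h₁m hac i
  have hψT₂ : ∀ᵐ x ∂μ, ψ (truncate j (T₂ x)) = truncate j x := by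
    filter_upwards [hψT₁, ae_all_iff.2 fun i => ae_all_iff.2 (hlt i)] with x hx hT₁₂
    rwa [← truncate_eq_truncate_iff.2 hT₁₂]
  refine h₁.ae_apply_eq_of_map_truncate_eq h₂ h₁m h₂m ?_
  rw [map_truncate_prodMk_apply h₁m hψ hψT₁, map_truncate_prodMk_apply h₂m hψ hψT₂, hmap]

end IsIncreasingTriangular

end Triangular

theorem increasing_triangular_pushforward_unique_ae_general {d : ℕ}
    (μ : Measure (Fin d → ℝ)) [IsFiniteMeasure μ]
    (ρ : Fin d → Measure ℝ) [∀ i, SigmaFinite (ρ i)] [∀ i, NullSingletonClass (ρ i)]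
    (T₁ T₂ : (Fin d → ℝ) → Fin d → ℝ) (h₁m : Measurable T₁) (h₂m : Measurable T₂)
    (h₁ : IsIncreasingTriangular T₁) (h₂ : IsIncreasingTriangular T₂)
    (hmap : μ.map T₁ = μ.map T₂) (hac : μ.map T₁ ≪ Measure.pi ρ) : T₁ =ᵐ[μ] T₂ := by
  have hcoord (j : Fin d) : ∀ᵐ x ∂μ, T₁ x j = T₂ x j := by
    induction j using WellFoundedLT.induction with
    | ind j ih => exact h₁.ae_apply_eq_of_ae_forall_lt h₂ h₁m h₂m hmap hac ih
  filter_upwards [ae_all_iff.2 hcoord] with x hx using funext hx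

theorem increasing_triangular_pushforward_unique_ae {d : ℕ}
    (p q : (Fin d → ℝ) → ENNReal) (hp : Measurable p) (hq : Measurable q)
    (μ ν : Measure (Fin d → ℝ)) [IsProbabilityMeasure μ] [IsProbabilityMeasure ν]
    (hμ : μ = volume.withDensity p) (hν : ν = volume.withDensity q)
    (T₁ T₂ : (Fin d → ℝ) → Fin d → ℝ)
    (h₁m : Measurable T₁) (h₂m : Measurable T₂)
    (h₁t : IsTriangularMap T₁) (h₂t : IsTriangularMap T₂)
    (h₁i : IsIncreasingTriangular T₁) (h₂i : IsIncreasingTriangular T₂)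
    (h₁ : Measure.map T₁ μ = ν) (h₂ : Measure.map T₂ μ = ν) :
    T₁ =ᵐ[μ] T₂ :=
  increasing_triangular_pushforward_unique_ae_general μ (fun _ => volume) T₁ T₂ h₁m h₂m h₁i h₂i
    (h₁.trans h₂.symm) (h₁.trans hν ▸ withDensity_absolutelyContinuous volume q)
end
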